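/- arXiv:2204.02642 — 6 statements merged into one kernel-verified Lean document; each statement's English description precedes it below -/
import Mathlib

section
/- Let H be a real Hilbert space, let L be a real number with 0 < L < 1, and let F : H → H satisfy ‖F x - F y‖² ≤ L · ⟪F x - F y, x - y⟫ for all x, y ∈ H (i.e., F is (1/L)-cocoercive). Let y⋆ ∈ H be a fixed point of F (F y⋆ = y⋆). Then for every y ∈ H, ((2 - L)/L) · ‖F y - y⋆‖² - ‖y - y⋆‖² ≤ -‖F y - y‖². -/
open scoped RealInnerProductSpace

theorem stmt_1 (H : Type*) [NormedAddCommGroup H] [InnerProductSpace ℝ H] [CompleteSpace H]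
    (L : ℝ) (hL0 : 0 < L) (hL1 : L < 1) (F : H → H)
    (hF : ∀ x y : H, ‖F x - F y‖ ^ 2 ≤ L * ⟪F x - F y, x - y⟫)
    (ystar : H) (hfix : F ystar = ystar) :
    ∀ y : H, ((2 - L) / L) * ‖F y - ystar‖ ^ 2 - ‖y - ystar‖ ^ 2 ≤ -‖F y - y‖ ^ 2 := by
  intro y
  have h := hF y ystar
  rw [hfix] at h
  -- Cocoercivity at the pair `(y, ystar)`, divided by `L`.
  have h1 : ‖F y - ystar‖ ^ 2 / L ≤ ⟪F y - ystar, y - ystar⟫ := by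
    rw [div_le_iff₀ hL0]
    linarith
  -- Expanding `‖(F y - ystar) - (y - ystar)‖ ^ 2` reduces the goal to twice `h1`.
  have h2 := norm_sub_sq_real (F y - ystar) (y - ystar)
  rw [sub_sub_sub_cancel_right] at h2
  have h3 : ((2 - L) / L) * ‖F y - ystar‖ ^ 2
      = 2 * (‖F y - ystar‖ ^ 2 / L) - ‖F y - ystar‖ ^ 2 := by
    field_simp
  rw [h3, h2]
  linarith
end

section
/- Let H be a real Hilbert space, let L be a real number with 0 < L < 1, let F : H → H satisfy ‖F x - F y‖² ≤ L · ⟪F x - F y, x - y⟫ for all x, y ∈ H, and let y⋆ ∈ H be a fixed point of F. Let (y_k) be a sequence in H with y_{k+1} = F y_k for all k ∈ ℕ, and set a = L/(2 - L). Then for every k ∈ ℕ, ‖y_{k+1} - y_k‖² ≤ a^k · (1 - a)/(1 - a^{k+1}) · ‖y⋆ - y_0‖². -/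
open scoped RealInnerProductSpace

/-!
Cocoercivity gives the contraction `‖F x - F y‖² ≤ a (‖x - y‖² - ‖(x - y) - (F x - F y)‖²)`
(`coco_contract`). Write `d k = ‖y (k+1) - y k‖²` and `r k = ‖y k - ystar‖²`. Applied to consecutive
iterates the contraction yields `d (k+1) ≤ a * d k`; applied to an iterate and the fixed point it
yields `r (k+1) ≤ a (r k - d k)`. Together they give, by induction,
`r (k+1) + a (k+1) d k ≤ a ^ (k+1) r 0`, hence `(k+1) d k ≤ a ^ k r 0`. This is stronger than the
stated rate, because `1 - a ^ (k+1) ≤ (k+1) (1 - a)` by Bernoulli's inequality.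
-/

/-- Here `u` and `v` stand for the differences `x - y` and `F x - F y`. -/
lemma coco_contract {H : Type*} [NormedAddCommGroup H] [InnerProductSpace ℝ H]
    {L : ℝ} (hL0 : 0 < L) (hL1 : L < 1) {u v : H} (h : ‖v‖ ^ 2 ≤ L * ⟪v, u⟫) :
    ‖v‖ ^ 2 ≤ L / (2 - L) * (‖u‖ ^ 2 - ‖u - v‖ ^ 2) := by
  have h2 : 0 < 2 - L := by linarith
  rw [norm_sub_sq_real, real_inner_comm, div_mul_eq_mul_div, le_div_iff₀ h2]
  nlinarith

theorem stmt_2 (H : Type*) [NormedAddCommGroup H] [InnerProductSpace ℝ H] [CompleteSpace H]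
    (L : ℝ) (hL0 : 0 < L) (hL1 : L < 1) (F : H → H)
    (hF : ∀ x y : H, ‖F x - F y‖ ^ 2 ≤ L * ⟪F x - F y, x - y⟫)
    (ystar : H) (hfix : F ystar = ystar)
    (y : ℕ → H) (hy : ∀ k : ℕ, y (k + 1) = F (y k))
    (a : ℝ) (ha : a = L / (2 - L)) :
    ∀ k : ℕ, ‖y (k + 1) - y k‖ ^ 2 ≤
      a ^ k * (1 - a) / (1 - a ^ (k + 1)) * ‖ystar - y 0‖ ^ 2 := by
  have ha0 : 0 < a := by rw [ha]; exact div_pos hL0 (by linarith)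
  have ha1 : a < 1 := by rw [ha, div_lt_one (by linarith)]; linarith
  have hd : ∀ k, ‖y (k + 1 + 1) - y (k + 1)‖ ^ 2 ≤ a * ‖y (k + 1) - y k‖ ^ 2 := by
    intro k
    have h := coco_contract hL0 hL1 (hF (y (k + 1)) (y k))
    rw [← hy, ← hy, ← ha] at h
    refine h.trans (mul_le_mul_of_nonneg_left ?_ ha0.le)
    linarith [sq_nonneg ‖y (k + 1) - y k - (y (k + 1 + 1) - y (k + 1))‖]
  have hr : ∀ k, ‖y (k + 1) - ystar‖ ^ 2 ≤
      a * (‖y k - ystar‖ ^ 2 - ‖y (k + 1) - y k‖ ^ 2) := by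
    intro k
    have h := coco_contract hL0 hL1 (hF (y k) ystar)
    rwa [← hy, hfix, ← ha, sub_sub_sub_cancel_right, norm_sub_rev (y k) (y (k + 1))] at h
  have inv : ∀ k : ℕ, ‖y (k + 1) - ystar‖ ^ 2 + a * ((k + 1) * ‖y (k + 1) - y k‖ ^ 2) ≤
      a ^ (k + 1) * ‖y 0 - ystar‖ ^ 2 := by
    intro k
    induction k with
    | zero => have := hr 0; simp only [zero_add] at *; push_cast; linarith
    | succ k ih =>
      have h1 := hr (k + 1)
      have h2 := mul_le_mul_of_nonneg_left (hd k) (show 0 ≤ a * ((k : ℝ) + 1) by positivity)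
      have h3 := mul_le_mul_of_nonneg_left ih ha0.le
      rw [pow_succ a (k + 1)]
      push_cast
      linarith
  intro k
  have hk : ((k : ℝ) + 1) * ‖y (k + 1) - y k‖ ^ 2 ≤ a ^ k * ‖y 0 - ystar‖ ^ 2 := by
    refine le_of_mul_le_mul_left ?_ ha0
    have h := inv k
    rw [pow_succ a k] at h
    linarith [sq_nonneg ‖y (k + 1) - ystar‖]
  have hb : 1 - a ^ (k + 1) ≤ (1 - a) * ((k : ℝ) + 1) := by
    have h := one_add_mul_le_pow (show (-2 : ℝ) ≤ a - 1 by linarith) (k + 1)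
    rw [add_sub_cancel] at h
    push_cast at h
    linarith
  have hp : 0 < 1 - a ^ (k + 1) := sub_pos.2 (pow_lt_one₀ ha0.le ha1 (by omega))
  rw [norm_sub_rev ystar, div_mul_eq_mul_div, le_div_iff₀ hp]
  have h1 := mul_le_mul_of_nonneg_left hb (sq_nonneg ‖y (k + 1) - y k‖)
  have h2 := mul_le_mul_of_nonneg_left hk (sub_pos.2 ha1).le
  linarith
end

section
/- Let H be a real Hilbert space, f : H → ℝ a convex function, S : H → H a continuous linear bijection with Hilbert adjoint S* (also a bijection), and let f⋆ : H → ℝ satisfy: for every w ∈ H, f⋆ w is the least upper bound of the set {⟪z, w⟫ - f z : z ∈ H} (i.e., f⋆ is the real-valued Fenchel conjugate of f). Fix v ∈ H. If x minimizes z ↦ f z + (1/2)‖S z - v‖² over H and y minimizes z ↦ f⋆ z + (1/2)‖(S*)⁻¹ z - v‖² over H, then y = S* (v - S x), and consequently v = S x + (S*)⁻¹ y. -/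
/-!
Put `p = S* (v - S x)`. A first-order argument along the segment from `x` to `z` shows that
`p` is a subgradient of `f` at `x`, so that `f⋆ p = ⟪x, p⟫ - f x` by the equality case of
Fenchel-Young, while `f⋆ y ≥ ⟪x, y⟫ - f x`. Hence `f⋆ y - f⋆ p ≥ ⟪x, y - p⟫ = ⟪S x, d⟫` with
`d = (S*)⁻¹ y - v + S x`. Comparing `y` with the competitor `p` in the dual problem and
expanding the squares leaves `‖d‖² / 2 ≤ 0`, that is `d = 0`, which is the decomposition.
-/

open scoped RealInnerProductSpace

/-- A quantity whose perturbations by `t / 2 * B` are nonnegative for all `t ∈ (0, 1]` is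
nonnegative. -/
lemma nonneg_of_forall_add_mul (A B : ℝ) (hB : 0 ≤ B)
    (h : ∀ t : ℝ, 0 < t → t ≤ 1 → 0 ≤ A + t / 2 * B) : 0 ≤ A := by
  by_contra! hA
  have hpos : 0 < B - A := by linarith
  -- This step makes `t * B ≤ -A`, so the perturbation cannot compensate for `A < 0`.
  have ht := h (-A / (B - A)) (div_pos (by linarith) hpos) ((div_le_one hpos).2 (by linarith))
  have hle : -A / (B - A) * B ≤ -A := by
    rw [div_mul_eq_mul_div, div_le_iff₀ hpos]
    nlinarith
  linarith

/-- First-order optimality condition: a minimizer `x` of `f + ‖S · - v‖² / 2` satisfies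
`S* (v - S x) ∈ ∂f x`, with the adjoint moved to the other side of the inner product. -/
lemma subgradient_of_minimizer {H : Type*} [NormedAddCommGroup H] [InnerProductSpace ℝ H]
    (f : H → ℝ) (hf : ConvexOn ℝ Set.univ f) (S : H ≃L[ℝ] H) (v x : H)
    (hx : ∀ z : H, f x + (1 / 2) * ‖S x - v‖ ^ 2 ≤ f z + (1 / 2) * ‖S z - v‖ ^ 2) (z : H) :
    f x + ⟪S (z - x), v - S x⟫ ≤ f z := by
  suffices h : 0 ≤ f z - f x - ⟪S (z - x), v - S x⟫ by linarith
  refine nonneg_of_forall_add_mul _ (‖S (z - x)‖ ^ 2) (sq_nonneg _) fun t ht ht1 => ?_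
  have hconv := hf.2 (Set.mem_univ x) (Set.mem_univ z) (sub_nonneg.2 ht1) ht.le (by ring)
  have hmin := hx ((1 - t) • x + t • z)
  have hS : S ((1 - t) • x + t • z) - v = t • S (z - x) - (v - S x) := by
    simp only [map_add, map_smul, map_sub]
    module
  rw [hS, norm_sub_sq_real (t • S (z - x)), norm_smul, real_inner_smul_left, norm_sub_rev (S x) v,
    Real.norm_of_nonneg ht.le] at hmin
  simp only [smul_eq_mul] at hconv
  refine nonneg_of_mul_nonneg_right ?_ ht
  nlinarith

theorem stmt_7 (H : Type*) [NormedAddCommGroup H] [InnerProductSpace ℝ H] [CompleteSpace H]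
    (f : H → ℝ) (hf : ConvexOn ℝ Set.univ f)
    (S Sadj : H ≃L[ℝ] H)
    (hadj : ∀ u w : H, ⟪S u, w⟫ = ⟪u, Sadj w⟫)
    (fstar : H → ℝ)
    (hfstar : ∀ w : H, IsLUB {r : ℝ | ∃ z : H, r = ⟪z, w⟫ - f z} (fstar w))
    (v x y : H)
    (hx : ∀ z : H, f x + (1 / 2) * ‖S x - v‖ ^ 2 ≤ f z + (1 / 2) * ‖S z - v‖ ^ 2)
    (hy : ∀ z : H,
      fstar y + (1 / 2) * ‖Sadj.symm y - v‖ ^ 2 ≤ fstar z + (1 / 2) * ‖Sadj.symm z - v‖ ^ 2) :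
    y = Sadj (v - S x) ∧ v = S x + Sadj.symm y := by
  set p := Sadj (v - S x) with hp
  have hconj_p : fstar p ≤ ⟪x, p⟫ - f x := by
    refine (hfstar p).2 ?_
    rintro r ⟨z, rfl⟩
    have h := subgradient_of_minimizer f hf S v x hx z
    rw [hadj, ← hp, inner_sub_left] at h
    linarith
  have hconj_y : ⟪x, y⟫ - f x ≤ fstar y := (hfstar y).1 ⟨x, rfl⟩
  have hinner_y : ⟪S x, Sadj.symm y⟫ = ⟪x, y⟫ := by
    rw [hadj, ContinuousLinearEquiv.apply_symm_apply]
  have hinner_p : ⟪S x, v - S x⟫ = ⟪x, p⟫ := hadj _ _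
  have hmin := hy p
  have hsymm : Sadj.symm p - v = -S x := by
    rw [hp, ContinuousLinearEquiv.symm_apply_apply]
    abel
  have hsplit : Sadj.symm y - v = (Sadj.symm y - (v - S x)) - S x := by abel
  rw [hsymm, norm_neg, hsplit, norm_sub_sq_real, real_inner_comm, inner_sub_right] at hmin
  have hd : ‖Sadj.symm y - (v - S x)‖ = 0 := by
    have : ‖Sadj.symm y - (v - S x)‖ ^ 2 ≤ 0 := by linarith
    exact pow_eq_zero_iff two_ne_zero |>.1 (le_antisymm this (sq_nonneg _))
  have hy_eq : Sadj.symm y = v - S x := sub_eq_zero.1 (norm_eq_zero.1 hd)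
  refine ⟨?_, ?_⟩
  · rw [hp, ← hy_eq, ContinuousLinearEquiv.apply_symm_apply]
  · rw [hy_eq]
    abel
end

section
/- Let n ≥ 1, let D be an n × n real matrix with Dᵀ D = diagonal(d) for a vector d ∈ ℝⁿ with d i > 0 for all i (i.e., D is a full-rank square matrix with orthogonal columns), and let v ∈ ℝⁿ. Set u = Dᵀ v, and define w ∈ ℝⁿ entrywise by w i = sign(u i) · max(|u i| - 1, 0) / d i. Then w minimizes the function x ↦ (∑ᵢ |x i|) + (1/2) ∑ⱼ ((D x - v) j)² over ℝⁿ. -/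
/-!
Because `Dᵀ D` is diagonal, `∑ⱼ ((D x - v) j)² = ∑ᵢ (d i * x i ² - 2 * u i * x i) + ∑ⱼ (v j)²`
(`sum_sq_mulVec_sub`), so the objective separates into one-variable problems: minimize
`|x| + d x² / 2 - u x`. In one variable the soft-thresholded point `w` satisfies the first-order
optimality condition that `u - d w` is a subgradient of `|·|` at `w`; the objective at `x` then
exceeds that at `w` by at least `d (x - w)² / 2 ≥ 0` (`soft_threshold_le`).
-/

lemma sum_sq_mulVec_sub {n : ℕ} (D : Matrix (Fin n) (Fin n) ℝ) (d : Fin n → ℝ)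
    (hD : D.transpose * D = Matrix.diagonal d) (v x : Fin n → ℝ) :
    ∑ j, (D.mulVec x j - v j) ^ 2 =
      ∑ i, (d i * x i ^ 2 - 2 * D.transpose.mulVec v i * x i) + ∑ j, v j ^ 2 := by
  have h1 : ∑ j, D.mulVec x j ^ 2 = ∑ i, d i * x i ^ 2 := by
    have : D.mulVec x ⬝ᵥ D.mulVec x = x ⬝ᵥ (Matrix.diagonal d).mulVec x := by
      rw [← hD, ← Matrix.mulVec_mulVec, Matrix.dotProduct_mulVec x, Matrix.vecMul_transpose]
    simp only [dotProduct, Matrix.mulVec_diagonal] at this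
    calc _ = ∑ j, D.mulVec x j * D.mulVec x j := by simp only [sq]
      _ = _ := this
      _ = _ := Finset.sum_congr rfl fun i _ => by ring
  have h2 : ∑ j, D.mulVec x j * v j = ∑ i, D.transpose.mulVec v i * x i := by
    change D.mulVec x ⬝ᵥ v = D.transpose.mulVec v ⬝ᵥ x
    rw [dotProduct_comm, Matrix.dotProduct_mulVec, Matrix.mulVec_transpose]
  calc _ = ∑ j, D.mulVec x j ^ 2 - 2 * ∑ j, D.mulVec x j * v j + ∑ j, v j ^ 2 := by
        rw [Finset.mul_sum, ← Finset.sum_sub_distrib, ← Finset.sum_add_distrib]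
        exact Finset.sum_congr rfl fun i _ => by ring
    _ = _ := by
        rw [h1, h2, Finset.mul_sum, ← Finset.sum_sub_distrib]
        simp only [mul_assoc]

lemma soft_threshold_le {d u w : ℝ} (hd : 0 < d)
    (hw : w = Real.sign u * max (|u| - 1) 0 / d) (x : ℝ) :
    |w| + (1 / 2) * (d * w ^ 2 - 2 * u * w) ≤ |x| + (1 / 2) * (d * x ^ 2 - 2 * u * x) := by
  have hdw : d * w = Real.sign u * max (|u| - 1) 0 := by rw [hw]; field_simp
  -- The two conditions for `u - d * w` to be a subgradient of `|·|` at `w`.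
  have key : |u - d * w| ≤ 1 ∧ |w| = (u - d * w) * w := by
    rcases le_or_gt |u| 1 with h | h
    · have h0 : w = 0 := by rw [hw, max_eq_right (by linarith)]; simp
      simpa [h0] using h
    · rw [max_eq_left (by linarith)] at hdw
      rcases lt_abs.mp h with h' | h'
      · rw [Real.sign_of_pos (by linarith), abs_of_pos (by linarith)] at hdw
        have e : u - d * w = 1 := by linarith
        have : 0 < w := by
          by_contra! hn
          nlinarith
        rw [e, abs_of_pos this]; simp
      · rw [Real.sign_of_neg (by linarith), abs_of_neg (by linarith)] at hdw
        have e : u - d * w = -1 := by linarith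
        have : w < 0 := by
          by_contra! hn
          nlinarith
        rw [e, abs_of_neg this]; simp
  obtain ⟨h1, h2⟩ := key
  have h3 : (u - d * w) * x ≤ |x| :=
    (le_abs_self _).trans <| by
      rw [abs_mul]; exact mul_le_of_le_one_left (abs_nonneg x) h1
  rw [h2]
  nlinarith [mul_nonneg hd.le (sq_nonneg (x - w))]

theorem stmt_8 (n : ℕ) (hn : 1 ≤ n) (D : Matrix (Fin n) (Fin n) ℝ) (d : Fin n → ℝ)
    (hD : D.transpose * D = Matrix.diagonal d) (hd : ∀ i, 0 < d i)
    (v : Fin n → ℝ) (u w : Fin n → ℝ)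
    (hu : u = D.transpose.mulVec v)
    (hw : ∀ i, w i = Real.sign (u i) * max (|u i| - 1) 0 / d i) :
    ∀ x : Fin n → ℝ,
      (∑ i, |w i|) + (1 / 2) * ∑ j, (D.mulVec w j - v j) ^ 2 ≤
        (∑ i, |x i|) + (1 / 2) * ∑ j, (D.mulVec x j - v j) ^ 2 := by
  intro x
  rw [sum_sq_mulVec_sub D d hD, sum_sq_mulVec_sub D d hD, ← hu]
  have h := Finset.sum_le_sum fun i (_ : i ∈ Finset.univ) => soft_threshold_le (hd i) (hw i) (x i)
  simp only [Finset.sum_add_distrib, ← Finset.mul_sum] at h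
  linarith
end

section
/- Let H be a real Hilbert space, f, g : H → ℝ convex functions, S : H → H a continuous linear bijection, and ψ ∈ H. Suppose z ∈ H minimizes z' ↦ g z' + (1/2)‖S z' - ψ‖² over H, x ∈ H minimizes x' ↦ f x' + (1/2)‖S x' - (2 • S z - ψ)‖² over H, and x = z. Then there exists u ∈ H such that for every w ∈ H, f w ≥ f x + ⟪u, w - x⟫ and g w ≥ g x + ⟪-u, w - x⟫ (i.e., 0 ∈ ∂f(x) + ∂g(x)). -/
open scoped RealInnerProductSpace

/-!
Fermat's rule for `F + ½‖S · - c‖²` with `F` convex says that `S†(c - S x)` is a subgradient of `F`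
at a minimizer `x`. For `g` the centre is `ψ`, giving the subgradient `S†(ψ - S x)`; for `f` the
centre is the reflected point `2 S x - ψ` (using `x = z`), giving `S†(S x - ψ)`. The two subgradients
are opposite.
-/

/-- Fermat's rule for a convex function plus a quadratic: the residual `c - S x`, pulled back by the
adjoint of `S`, is a subgradient of `F` at the minimizer `x`. Obtained by comparing `x` with
`x + t (w - x)` for small `t > 0`. -/
lemma subgradient_of_isMin_add_sq {H : Type*} [NormedAddCommGroup H] [InnerProductSpace ℝ H]
    [CompleteSpace H] {F : H → ℝ} (hF : ConvexOn ℝ Set.univ F) (S : H →L[ℝ] H) {c x : H}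
    (hmin : ∀ y : H, F x + (1 / 2) * ‖S x - c‖ ^ 2 ≤ F y + (1 / 2) * ‖S y - c‖ ^ 2) (w : H) :
    F x + ⟪S.adjoint (c - S x), w - x⟫ ≤ F w := by
  rw [ContinuousLinearMap.adjoint_inner_left, ← neg_sub (S x) c, inner_neg_left]
  have key : ∀ t : ℝ, 0 < t → t ≤ 1 →
      0 ≤ (F w - F x + ⟪S x - c, S (w - x)⟫) + t / 2 * ‖S (w - x)‖ ^ 2 := by
    intro t ht ht1
    have h1 := hmin (x + t • (w - x))
    have h2 := hF.2 (Set.mem_univ x) (Set.mem_univ w) (sub_nonneg.2 ht1) ht.le (by ring)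
    have h3 : (1 - t) • x + t • w = x + t • (w - x) := by module
    have h4 : S (x + t • (w - x)) - c = (S x - c) + t • S (w - x) := by
      rw [map_add, map_smul]; abel
    rw [h3, smul_eq_mul, smul_eq_mul] at h2
    rw [h4, norm_add_sq_real, inner_smul_right, norm_smul, mul_pow, Real.norm_eq_abs, sq_abs] at h1
    refine (mul_nonneg_iff_of_pos_left ht).1 ?_
    linarith
  by_contra! hlt
  set A := F w - F x + ⟪S x - c, S (w - x)⟫ with hA
  set N := ‖S (w - x)‖ ^ 2 with hN
  have hA0 : A < 0 := by linarith
  have hN0 : 0 ≤ N := by positivity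
  have hd : 0 < N - A := by linarith
  -- This `t` lies in `(0, 1]` and makes the quadratic term `t / 2 * N` smaller than `-A`.
  have h := key (-A / (N - A)) (div_pos (by linarith) hd) ((div_le_one hd).2 (by linarith))
  have h5 : A + -A / (N - A) / 2 * N = A * (N / 2 - A) / (N - A) := by
    field_simp
    ring
  rw [h5] at h
  exact absurd h (not_le.2 (div_neg_of_neg_of_pos (mul_neg_of_neg_of_pos hA0 (by linarith)) hd))

theorem stmt_11 (H : Type*) [NormedAddCommGroup H] [InnerProductSpace ℝ H] [CompleteSpace H]
    (f g : H → ℝ) (hf : ConvexOn ℝ Set.univ f) (hg : ConvexOn ℝ Set.univ g)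
    (S : H ≃L[ℝ] H) (ψ z x : H)
    (hz : ∀ z' : H, g z + (1 / 2) * ‖S z - ψ‖ ^ 2 ≤ g z' + (1 / 2) * ‖S z' - ψ‖ ^ 2)
    (hx : ∀ x' : H,
      f x + (1 / 2) * ‖S x - ((2 : ℝ) • S z - ψ)‖ ^ 2 ≤
        f x' + (1 / 2) * ‖S x' - ((2 : ℝ) • S z - ψ)‖ ^ 2)
    (hxz : x = z) :
    ∃ u : H, (∀ w : H, f w ≥ f x + ⟪u, w - x⟫) ∧ (∀ w : H, g w ≥ g x + ⟪-u, w - x⟫) := by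
  subst hxz
  refine ⟨(S : H →L[ℝ] H).adjoint (S x - ψ), fun w => ?_, fun w => ?_⟩
  · have h := subgradient_of_isMin_add_sq hf (S : H →L[ℝ] H) hx w
    have e : (2 : ℝ) • S x - ψ - S x = S x - ψ := by module
    rwa [ContinuousLinearEquiv.coe_coe, e] at h
  · have h := subgradient_of_isMin_add_sq hg (S : H →L[ℝ] H) hz w
    rwa [ContinuousLinearEquiv.coe_coe, ← neg_sub (S x) ψ, map_neg] at h
end

section
/- Let H be a real Hilbert space and let x, λ ∈ H be nonzero vectors with ⟪x, λ⟫ = 0. Set α = √(‖λ‖/‖x‖). Then ‖α • x + α⁻¹ • λ‖² · (α² + α⁻²) = 2 ‖x + λ‖². -/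
open scoped RealInnerProductSpace

/-! Write `a = ‖x‖` and `b = ‖lam‖`, so that `α ^ 2 = b / a`. By Pythagoras
`‖α • x + α⁻¹ • lam‖ ^ 2 = (b / a) * a ^ 2 + (a / b) * b ^ 2 = 2 * a * b`, and multiplying by
`b / a + a / b` gives `2 * (a ^ 2 + b ^ 2) = 2 * ‖x + lam‖ ^ 2`, again by Pythagoras. -/

theorem stmt_15 (H : Type*) [NormedAddCommGroup H] [InnerProductSpace ℝ H] [CompleteSpace H]
    (x lam : H) (hx : x ≠ 0) (hlam : lam ≠ 0) (horth : ⟪x, lam⟫ = 0)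
    (α : ℝ) (hα : α = Real.sqrt (‖lam‖ / ‖x‖)) :
    ‖α • x + α⁻¹ • lam‖ ^ 2 * (α ^ 2 + α⁻¹ ^ 2) = 2 * ‖x + lam‖ ^ 2 := by
  have ha : ‖x‖ ≠ 0 := norm_ne_zero_iff.mpr hx
  have hb : ‖lam‖ ≠ 0 := norm_ne_zero_iff.mpr hlam
  have hα2 : α ^ 2 = ‖lam‖ / ‖x‖ := by
    rw [hα, Real.sq_sqrt (by positivity)]
  have h1 : ‖x + lam‖ ^ 2 = ‖x‖ ^ 2 + ‖lam‖ ^ 2 := by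
    rw [norm_add_sq_real, horth]; ring
  have h2 : ‖α • x + α⁻¹ • lam‖ ^ 2 = α ^ 2 * ‖x‖ ^ 2 + (α ^ 2)⁻¹ * ‖lam‖ ^ 2 := by
    rw [norm_add_sq_real, real_inner_smul_left, real_inner_smul_right, horth, norm_smul,
      norm_smul, mul_pow, mul_pow, Real.norm_eq_abs, Real.norm_eq_abs, sq_abs, sq_abs, inv_pow]
    ring
  rw [h1, h2, inv_pow, hα2]
  field_simp
  ring
end
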